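/- Let X_1, X_2, … be identically distributed and upper extended negatively dependent random variables in a sub-linear expectation space with lim_{c→∞} 𝔼[(|X_1| − c)⁺] = 0 and C_𝕍(|X_1|) < ∞, and set S_n = Σ_{k=1}^n X_k. Then 𝕍*( limsup_{n→∞} S_n/n > 𝔼[X_1] ) = 0. -/

import Mathlib

open Filter MeasureTheory
open scoped ENNReal NNReal

noncomputable section

/-- A sub-linear expectation on `Ω`: a monotone, constant-preserving, sub-additive,
positively homogeneous functional on real random variables (with values in the
extended reals, so that random variables without a finite expectation are allowed). -/
structure SublinearExp (Ω : Type) where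
  E : (Ω → ℝ) → EReal
  mono : ∀ X Y : Ω → ℝ, (∀ ω, X ω ≤ Y ω) → E X ≤ E Y
  const_eq : ∀ c : ℝ, E (fun _ => c) = (c : EReal)
  subadd : ∀ X Y : Ω → ℝ, E (fun ω => X ω + Y ω) ≤ E X + E Y
  pos_homog : ∀ lam : ℝ, 0 ≤ lam → ∀ X : Ω → ℝ,
    E (fun ω => lam * X ω) = (lam : EReal) * E X

namespace SublinearExp

variable {Ω : Type}

/-- The conjugate expectation `ℰ[X] := −𝔼[−X]`. -/
def cE (SL : SublinearExp Ω) (X : Ω → ℝ) : EReal := - SL.E fun ω => - X ω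

/-- The upper capacity `𝕍(A) := inf{𝔼[ξ] : 1_A ≤ ξ}`. -/
def V (SL : SublinearExp Ω) (A : Set Ω) : ℝ :=
  sInf {x : ℝ | ∃ ξ : Ω → ℝ,
    (∀ ω, A.indicator (fun _ => (1 : ℝ)) ω ≤ ξ ω) ∧ SL.E ξ = (x : EReal)}

/-- The lower capacity `𝓋(A) := 1 − 𝕍(Aᶜ)`. -/
def vLow (SL : SublinearExp Ω) (A : Set Ω) : ℝ := 1 - SL.V Aᶜ

/-- The Choquet integral `C_𝕍(X) := ∫₀^∞ 𝕍(X ≥ t) dt` (of a non-negative r.v.). -/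
def Choquet (SL : SublinearExp Ω) (X : Ω → ℝ) : ℝ≥0∞ :=
  ∫⁻ t in Set.Ioi (0 : ℝ), ENNReal.ofReal (SL.V {ω | t ≤ X ω})

/-- The outer capacity `𝕍*(A) := inf{Σ_n 𝕍(A_n) : A ⊆ ∪_n A_n}`. -/
def Vout (SL : SublinearExp Ω) (A : Set Ω) : ℝ≥0∞ :=
  ⨅ (B : ℕ → Set Ω) (_ : A ⊆ ⋃ n, B n), ∑' n, ENNReal.ofReal (SL.V (B n))

/-- The upper capacity is continuous: continuous from below and from above. -/
def ContinuousCapacity (SL : SublinearExp Ω) : Prop :=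
  (∀ A : ℕ → Set Ω, Monotone A →
    Tendsto (fun n => SL.V (A n)) atTop (nhds (SL.V (⋃ n, A n)))) ∧
  (∀ A : ℕ → Set Ω, Antitone A →
    Tendsto (fun n => SL.V (A n)) atTop (nhds (SL.V (⋂ n, A n))))

/-- Bounded Lipschitz function on ℝ. -/
def IsBLip (g : ℝ → ℝ) : Prop :=
  (∃ L : NNReal, LipschitzWith L g) ∧ ∃ M : ℝ, ∀ x, |g x| ≤ M

/-- Local Lipschitz function on ℝ: `|φ(x) − φ(y)| ≤ C(1+|x|^m+|y|^m)|x−y|`. -/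
def IsLocLip (φ : ℝ → ℝ) : Prop :=
  ∃ (C : ℝ) (m : ℕ), ∀ x y : ℝ, |φ x - φ y| ≤ C * (1 + |x| ^ m + |y| ^ m) * |x - y|

/-- Upper extended negative dependence (finite family) with dominating constant `K`:
`𝔼[∏ g_i(X_i)] ≤ K ∏ 𝔼[g_i(X_i)]` for all non-negative bounded Lipschitz
non-decreasing `g_i`.  (Expectations of bounded functions are finite, whence
the `toReal`.) -/
def UENDFin (SL : SublinearExp Ω) (K : ℝ) {n : ℕ} (X : Fin n → Ω → ℝ) : Prop :=
  ∀ g : Fin n → ℝ → ℝ, (∀ i, IsBLip (g i)) → (∀ i, Monotone (g i)) →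
    (∀ i x, 0 ≤ g i x) →
    SL.E (fun ω => ∏ i, g i (X i ω)) ≤
      ((K * ∏ i, (SL.E fun ω => g i (X i ω)).toReal : ℝ) : EReal)

/-- Upper extended negative dependence for a sequence. -/
def UEND (SL : SublinearExp Ω) (K : ℝ) (X : ℕ → Ω → ℝ) : Prop :=
  ∀ n : ℕ, ∀ g : ℕ → ℝ → ℝ, (∀ i, IsBLip (g i)) → (∀ i, Monotone (g i)) →
    (∀ i x, 0 ≤ g i x) →
    SL.E (fun ω => ∏ i ∈ Finset.range n, g i (X i ω)) ≤
      ((K * ∏ i ∈ Finset.range n, (SL.E fun ω => g i (X i ω)).toReal : ℝ) : EReal)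

/-- Lower extended negative dependence for a sequence. -/
def LEND (SL : SublinearExp Ω) (K : ℝ) (X : ℕ → Ω → ℝ) : Prop :=
  ∀ n : ℕ, ∀ g : ℕ → ℝ → ℝ, (∀ i, IsBLip (g i)) → (∀ i, Antitone (g i)) →
    (∀ i x, 0 ≤ g i x) →
    SL.E (fun ω => ∏ i ∈ Finset.range n, g i (X i ω)) ≤
      ((K * ∏ i ∈ Finset.range n, (SL.E fun ω => g i (X i ω)).toReal : ℝ) : EReal)

/-- Extended negative dependence = upper and lower END. -/
def END (SL : SublinearExp Ω) (K : ℝ) (X : ℕ → Ω → ℝ) : Prop :=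
  UEND SL K X ∧ LEND SL K X

/-- Upper extended negative dependence under the conjugate expectation `ℰ`
(finite family). -/
def UENDFinConj (SL : SublinearExp Ω) (K : ℝ) {n : ℕ} (X : Fin n → Ω → ℝ) : Prop :=
  ∀ g : Fin n → ℝ → ℝ, (∀ i, IsBLip (g i)) → (∀ i, Monotone (g i)) →
    (∀ i x, 0 ≤ g i x) →
    SL.cE (fun ω => ∏ i, g i (X i ω)) ≤
      ((K * ∏ i, (SL.cE fun ω => g i (X i ω)).toReal : ℝ) : EReal)

/-- Upper extended negative dependence under the conjugate expectation (sequence). -/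
def UENDconj (SL : SublinearExp Ω) (K : ℝ) (X : ℕ → Ω → ℝ) : Prop :=
  ∀ n : ℕ, ∀ g : ℕ → ℝ → ℝ, (∀ i, IsBLip (g i)) → (∀ i, Monotone (g i)) →
    (∀ i x, 0 ≤ g i x) →
    SL.cE (fun ω => ∏ i ∈ Finset.range n, g i (X i ω)) ≤
      ((K * ∏ i ∈ Finset.range n, (SL.cE fun ω => g i (X i ω)).toReal : ℝ) : EReal)

/-- Lower extended negative dependence under the conjugate expectation (sequence). -/
def LENDconj (SL : SublinearExp Ω) (K : ℝ) (X : ℕ → Ω → ℝ) : Prop :=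
  ∀ n : ℕ, ∀ g : ℕ → ℝ → ℝ, (∀ i, IsBLip (g i)) → (∀ i, Antitone (g i)) →
    (∀ i x, 0 ≤ g i x) →
    SL.cE (fun ω => ∏ i ∈ Finset.range n, g i (X i ω)) ≤
      ((K * ∏ i ∈ Finset.range n, (SL.cE fun ω => g i (X i ω)).toReal : ℝ) : EReal)

/-- Extended negative dependence under the conjugate expectation. -/
def ENDconj (SL : SublinearExp Ω) (K : ℝ) (X : ℕ → Ω → ℝ) : Prop :=
  UENDconj SL K X ∧ LENDconj SL K X

/-- Extended independence of a sequence: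
`𝔼[∏ ψ_i(X_i)] = ∏ 𝔼[ψ_i(X_i)]` for non-negative local Lipschitz `ψ_i`,
whenever the expectations involved are finite. -/
def ExtIndep (SL : SublinearExp Ω) (X : ℕ → Ω → ℝ) : Prop :=
  ∀ n : ℕ, ∀ ψ : ℕ → ℝ → ℝ, (∀ i, IsLocLip (ψ i)) → (∀ i x, 0 ≤ ψ i x) →
    (∀ i ∈ Finset.range n, SL.E (fun ω => ψ i (X i ω)) ≠ ⊤) →
    SL.E (fun ω => ∏ i ∈ Finset.range n, ψ i (X i ω)) =
      ((∏ i ∈ Finset.range n, (SL.E fun ω => ψ i (X i ω)).toReal : ℝ) : EReal)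

/-- Extended independence of two random variables. -/
def ExtIndepPair (SL : SublinearExp Ω) (Y Z : Ω → ℝ) : Prop :=
  ∀ ψ₁ ψ₂ : ℝ → ℝ, IsLocLip ψ₁ → IsLocLip ψ₂ →
    (∀ x, 0 ≤ ψ₁ x) → (∀ x, 0 ≤ ψ₂ x) →
    SL.E (fun ω => ψ₁ (Y ω)) ≠ ⊤ → SL.E (fun ω => ψ₂ (Z ω)) ≠ ⊤ →
    SL.E (fun ω => ψ₁ (Y ω) * ψ₂ (Z ω)) =
      (((SL.E fun ω => ψ₁ (Y ω)).toReal * (SL.E fun ω => ψ₂ (Z ω)).toReal : ℝ) : EReal)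

/-- Identically distributed: `𝔼[φ(X_i)] = 𝔼[φ(X_1)]` for all local Lipschitz `φ`. -/
def IdentDist (SL : SublinearExp Ω) (X : ℕ → Ω → ℝ) : Prop :=
  ∀ (i : ℕ) (φ : ℝ → ℝ), IsLocLip φ →
    SL.E (fun ω => φ (X i ω)) = SL.E fun ω => φ (X 0 ω)

end SublinearExp

/-- `log x = ln(x ∨ e)`. -/
def paperLog (x : ℝ) : ℝ := Real.log (max x (Real.exp 1))

/-- `a_n = √(2 n log log n)` with the above convention for `log`. -/
def lilA (n : ℕ) : ℝ := Real.sqrt (2 * n * paperLog (paperLog n))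

namespace SublinearExp

variable {Ω : Type} (SL : SublinearExp Ω)

lemma E_le_add {f g h : Ω → ℝ} {a b : ℝ} (hh : ∀ ω, h ω ≤ f ω + g ω)
    (hf : SL.E f ≤ a) (hg : SL.E g ≤ b) : SL.E h ≤ ((a + b : ℝ) : EReal) := by
  rw [EReal.coe_add]
  exact (SL.mono _ _ hh).trans ((SL.subadd f g).trans (add_le_add hf hg))

lemma E_le_const_mul {f : Ω → ℝ} {a l : ℝ} (hl : 0 ≤ l) (hf : SL.E f ≤ a) :
    SL.E (fun ω => l * f ω) ≤ ((l * a : ℝ) : EReal) := by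
  rw [SL.pos_homog l hl, EReal.coe_mul]
  exact mul_le_mul_of_nonneg_left hf (EReal.coe_nonneg.2 hl)

lemma E_le_sum {ι : Type*} (s : Finset ι) (f : ι → Ω → ℝ) (a : ι → ℝ)
    (hf : ∀ i ∈ s, SL.E (f i) ≤ a i) :
    SL.E (fun ω => ∑ i ∈ s, f i ω) ≤ ((∑ i ∈ s, a i : ℝ) : EReal) := by
  classical
  induction s using Finset.induction_on with
  | empty => simpa using (SL.const_eq 0).le
  | insert i s hi ih =>
    rw [Finset.sum_insert hi]
    refine SL.E_le_add (fun ω => (Finset.sum_insert hi).le) (hf i (by simp)) (ih ?_)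
    exact fun k hk => hf k (by simp [hk])

lemma E_nonneg {f : Ω → ℝ} (hf : ∀ ω, 0 ≤ f ω) : 0 ≤ SL.E f := by
  have := SL.mono (fun _ => 0) f hf
  rwa [SL.const_eq, EReal.coe_zero] at this

lemma E_ne_bot (f : Ω → ℝ) : SL.E f ≠ ⊥ := by
  intro h
  have h1 := SL.subadd f (fun ω => -f ω)
  simp only [add_neg_cancel, h, EReal.bot_add, SL.const_eq] at h1
  exact absurd h1 (by simp)

lemma toReal_E_le {f : Ω → ℝ} {a : ℝ} (hf : SL.E f ≤ a) : (SL.E f).toReal ≤ a := by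
  simpa using EReal.toReal_le_toReal hf (SL.E_ne_bot f) (EReal.coe_ne_top a)

lemma E_indicator (A : Set Ω) :
    SL.E (A.indicator fun _ => (1 : ℝ)) = (SL.V A : EReal) := by
  set f : Ω → ℝ := A.indicator fun _ => (1 : ℝ) with hfdef
  have h1 : SL.E f ≤ ((1 : ℝ) : EReal) := by
    rw [← SL.const_eq 1]
    refine SL.mono _ _ fun ω => ?_
    exact Set.indicator_le_self' (fun _ _ => zero_le_one) ω
  have hne : SL.E f ≠ ⊤ := ne_top_of_le_ne_top (EReal.coe_ne_top 1) h1
  have hc : ((SL.E f).toReal : EReal) = SL.E f := EReal.coe_toReal hne (SL.E_ne_bot f)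
  have hleast : IsLeast {x : ℝ | ∃ ξ : Ω → ℝ,
      (∀ ω, A.indicator (fun _ => (1 : ℝ)) ω ≤ ξ ω) ∧ SL.E ξ = (x : EReal)}
      (SL.E f).toReal := by
    refine ⟨⟨f, fun ω => le_rfl, hc.symm⟩, ?_⟩
    rintro x ⟨ξ, hξ, hx⟩
    exact SL.toReal_E_le ((SL.mono _ _ hξ).trans hx.le)
  rw [V, hleast.csInf_eq, hc]

lemma V_le_of_E_le {A : Set Ω} {f : Ω → ℝ} {a : ℝ} (hf : ∀ ω, 0 ≤ f ω)
    (hA : ∀ ω ∈ A, 1 ≤ f ω) (ha : SL.E f ≤ a) : SL.V A ≤ a := by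
  rw [← EReal.coe_le_coe_iff, ← SL.E_indicator]
  refine (SL.mono _ _ fun ω => ?_).trans ha
  exact Set.indicator_apply_le' (hA ω) (fun _ => hf ω)

lemma V_nonneg (A : Set Ω) : 0 ≤ SL.V A := by
  rw [← EReal.coe_nonneg, ← SL.E_indicator]
  exact SL.E_nonneg fun ω => Set.indicator_nonneg (fun _ _ => zero_le_one) ω

lemma V_mono {A B : Set Ω} (h : A ⊆ B) : SL.V A ≤ SL.V B := by
  refine SL.V_le_of_E_le (f := B.indicator fun _ => 1)
    (fun ω => Set.indicator_nonneg (fun _ _ => zero_le_one) ω) (fun ω hω => ?_) (SL.E_indicator B).le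
  simp [h hω]

lemma V_empty : SL.V ∅ = 0 :=
  le_antisymm (SL.V_le_of_E_le (f := fun _ => 0) (by simp) (by simp) (SL.const_eq 0).le)
    (SL.V_nonneg ∅)

/-- The outer measure generated by the upper capacity; it agrees with `Vout`. -/
def outerCapacity : OuterMeasure Ω :=
  OuterMeasure.ofFunction (fun A => ENNReal.ofReal (SL.V A)) (by simp [SL.V_empty])

lemma outerCapacity_apply (A : Set Ω) : SL.outerCapacity A = SL.Vout A :=
  OuterMeasure.ofFunction_apply _ _ A

lemma outerCapacity_le (A : Set Ω) : SL.outerCapacity A ≤ ENNReal.ofReal (SL.V A) :=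
  OuterMeasure.ofFunction_le A

/-- Borel–Cantelli lemma for the outer capacity. -/
lemma outerCapacity_frequently_eq_zero {B : ℕ → Set Ω} {u : ℕ → ℝ} (hu : Summable u)
    (hB : ∀ᶠ j in atTop, SL.V (B j) ≤ u j) :
    SL.outerCapacity {ω | ∃ᶠ j in atTop, ω ∈ B j} = 0 := by
  have hs : Summable fun j => SL.V (B j) := by
    refine Summable.of_norm_bounded_eventually_nat hu ?_
    filter_upwards [hB] with j hj
    rwa [Real.norm_of_nonneg (SL.V_nonneg _)]
  refine measure_setOfPred_frequently_eq_zero (ne_top_of_le_ne_top hs.tsum_ofReal_ne_top ?_)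
  exact ENNReal.tsum_le_tsum fun j => SL.outerCapacity_le _

/-- Finiteness of a Choquet integral controls the dyadic tail sums. -/
lemma summable_dyadic_tail {Y : Ω → ℝ} (h : SL.Choquet Y ≠ ⊤) :
    Summable fun i : ℕ => (2 : ℝ) ^ i * SL.V {ω | 2 ^ i ≤ Y ω} := by
  rw [← summable_nat_add_iff 1]
  have hI : ∀ i : ℕ, ENNReal.ofReal (2 ^ i * SL.V {ω | 2 ^ (i + 1) ≤ Y ω}) ≤
      ∫⁻ t in Set.Ioc ((2 : ℝ) ^ i) (2 ^ (i + 1)), ENNReal.ofReal (SL.V {ω | t ≤ Y ω}) := by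
    intro i
    calc ENNReal.ofReal (2 ^ i * SL.V {ω | 2 ^ (i + 1) ≤ Y ω})
        = ∫⁻ _ in Set.Ioc ((2 : ℝ) ^ i) (2 ^ (i + 1)),
            ENNReal.ofReal (SL.V {ω | 2 ^ (i + 1) ≤ Y ω}) := by
          rw [setLIntegral_const, Real.volume_Ioc,
            ENNReal.ofReal_mul (by positivity), mul_comm]
          congr 2
          ring
      _ ≤ _ := by
          refine setLIntegral_mono' measurableSet_Ioc fun t ht => ?_
          exact ENNReal.ofReal_le_ofReal (SL.V_mono fun ω hω => ht.2.trans hω)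
  have hdisj : Pairwise (Function.onFun Disjoint
      fun i : ℕ => Set.Ioc ((2 : ℝ) ^ i) (2 ^ (i + 1))) := by
    have hm : Monotone fun i : ℕ => (2 : ℝ) ^ i :=
      fun a b hab => pow_le_pow_right₀ one_le_two hab
    exact hm.pairwise_disjoint_on_Ioc_succ
  have hfin : ∑' i : ℕ, ENNReal.ofReal (2 ^ i * SL.V {ω | 2 ^ (i + 1) ≤ Y ω}) ≠ ⊤ := by
    refine ne_top_of_le_ne_top h ((ENNReal.tsum_le_tsum hI).trans ?_)
    rw [← lintegral_iUnion (fun i => measurableSet_Ioc) hdisj]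
    refine lintegral_mono_set (Set.iUnion_subset fun i t ht => ?_)
    exact lt_trans (by positivity) ht.1
  have hs := ENNReal.summable_toReal hfin
  refine (hs.mul_left 2).congr fun i => ?_
  rw [ENNReal.toReal_ofReal (mul_nonneg (by positivity) (SL.V_nonneg _))]
  ring

lemma IsLocLip.of_lipschitzWith {g : ℝ → ℝ} {L : ℝ≥0} (hg : LipschitzWith L g) :
    IsLocLip g := by
  refine ⟨L, 0, fun x y => ?_⟩
  have h := hg.dist_le_mul x y
  rw [Real.dist_eq, Real.dist_eq] at h
  have : 0 ≤ (L : ℝ) * |x - y| := by positivity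
  simp only [pow_zero]
  linarith

lemma lipschitzWith_exp_of_le {f : ℝ → ℝ} {L : ℝ≥0} (hf : LipschitzWith L f) {M : ℝ}
    (hM : ∀ x, f x ≤ M) : LipschitzWith ((Real.exp M).toNNReal * L) fun x => Real.exp (f x) := by
  refine LipschitzWith.of_le_add_mul _ fun x y => ?_
  have h1 : Real.exp (f x) * (1 + (f y - f x)) ≤ Real.exp (f y) := by
    have := Real.add_one_le_exp (f y - f x)
    calc _ ≤ Real.exp (f x) * Real.exp (f y - f x) := by gcongr; linarith
      _ = _ := by rw [← Real.exp_add]; ring_nf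
  have h2 : f x - f y ≤ L * dist x y := by
    have := hf.dist_le_mul x y
    rw [Real.dist_eq] at this
    exact (le_abs_self _).trans this
  have h3 : Real.exp (f x) * (f x - f y) ≤ Real.exp M * (L * dist x y) := by
    calc Real.exp (f x) * (f x - f y) ≤ Real.exp (f x) * (L * dist x y) := by gcongr
      _ ≤ _ := by gcongr; exact hM x
  rw [NNReal.coe_mul, Real.coe_toNNReal _ (Real.exp_pos _).le]
  linarith

lemma exp_le_quadratic {x s : ℝ} (hx : 0 ≤ x) (hs : x ≤ s) :
    Real.exp x ≤ 1 + x + x ^ 2 * Real.exp s := by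
  have h1 : Real.exp x ≤ 1 + x * Real.exp x := by
    have h := mul_le_mul_of_nonneg_left (Real.add_one_le_exp (-x)) (Real.exp_pos x).le
    rw [← Real.exp_add, add_neg_cancel, Real.exp_zero] at h
    linarith
  have h2 : x * Real.exp x ≤ x * (1 + x * Real.exp x) := by gcongr
  have h3 : x ^ 2 * Real.exp x ≤ x ^ 2 * Real.exp s := by gcongr
  linarith

/-- Exponential moment bound for sums truncated from both sides. -/
lemma E_exp_truncated_sum_le {X : ℕ → Ω → ℝ} {K : ℝ} (hK : 1 ≤ K) (hid : IdentDist SL X)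
    (hU : UEND SL K X) {b c m q t : ℝ} (hc : 0 ≤ c) (ht : 0 ≤ t)
    (hm : SL.E (fun ω => max (X 0 ω + b) 0) ≤ m)
    (hq : SL.E (fun ω => min (max (X 0 ω + b) 0) c ^ 2) ≤ q) (n : ℕ) :
    SL.E (fun ω => Real.exp (t * ∑ k ∈ Finset.range n, min (max (X k ω + b) 0) c)) ≤
      ((K * Real.exp (n * (t * m + t ^ 2 * Real.exp (t * c) * q)) : ℝ) : EReal) := by
  set f : ℝ → ℝ := fun x => t * min (max (x + b) 0) c with hf
  have hfL : LipschitzWith (t.toNNReal * 1) f := by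
    have h1 : LipschitzWith 1 fun x : ℝ => min (max (x + b) 0) c :=
      ((LipschitzWith.of_dist_le_mul (by simp)).max_const 0).min_const c
    refine LipschitzWith.of_dist_le_mul fun x y => ?_
    have := h1.dist_le_mul x y
    rw [Real.dist_eq] at this ⊢
    simp only [hf, ← mul_sub, abs_mul, abs_of_nonneg ht, NNReal.coe_mul,
      Real.coe_toNNReal _ ht, mul_assoc]
    gcongr
  have hfM : ∀ x, f x ≤ t * c := fun x => mul_le_mul_of_nonneg_left (min_le_right _ _) ht
  have hgL := lipschitzWith_exp_of_le hfL hfM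
  have hE : ∀ i, SL.E (fun ω => Real.exp (f (X i ω))) ≤
      ((1 + (t * m + t ^ 2 * Real.exp (t * c) * q) : ℝ) : EReal) := by
    intro i
    rw [hid i _ (IsLocLip.of_lipschitzWith hgL)]
    refine SL.E_le_add (f := fun _ => 1) (fun ω => ?_) (SL.const_eq 1).le
      (SL.E_le_add (fun ω => le_rfl) (SL.E_le_const_mul ht hm)
        (SL.E_le_const_mul (l := t ^ 2 * Real.exp (t * c)) (by positivity) hq))
    have h0 : 0 ≤ min (max (X 0 ω + b) 0) c := le_min (le_max_right _ _) hc
    have h1 := exp_le_quadratic (mul_nonneg ht h0) (hfM (X 0 ω))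
    have h2 : t * min (max (X 0 ω + b) 0) c ≤ t * max (X 0 ω + b) 0 :=
      mul_le_mul_of_nonneg_left (min_le_left _ _) ht
    simp only [hf]
    linarith
  have hmono : Monotone fun x => Real.exp (f x) := fun x y hxy =>
    Real.exp_le_exp.2 (mul_le_mul_of_nonneg_left (by gcongr) ht)
  have hprod := hU n (fun _ x => Real.exp (f x))
    (fun _ => ⟨⟨_, hgL⟩, Real.exp (t * c), fun x => by
      rw [abs_of_pos (Real.exp_pos _)]; exact Real.exp_le_exp.2 (hfM x)⟩)
    (fun _ => hmono) (fun _ x => (Real.exp_pos _).le)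
  have heq : (fun ω => Real.exp (t * ∑ k ∈ Finset.range n, min (max (X k ω + b) 0) c)) =
      fun ω => ∏ i ∈ Finset.range n, Real.exp (f (X i ω)) := by
    funext ω
    rw [← Real.exp_sum, Finset.mul_sum]
  rw [heq]
  refine hprod.trans (EReal.coe_le_coe_iff.2 ?_)
  refine mul_le_mul_of_nonneg_left ?_ (by linarith)
  rw [Real.exp_nat_mul, ← Finset.card_range n, ← Finset.prod_const, Finset.card_range]
  refine Finset.prod_le_prod (fun i _ => EReal.toReal_nonneg
    (SL.E_nonneg fun ω => (Real.exp_pos _).le)) fun i _ => ?_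
  refine (SL.toReal_E_le (hE i)).trans ?_
  linarith [Real.add_one_le_exp (t * m + t ^ 2 * Real.exp (t * c) * q)]

/-- Deviation bound for truncated sums, with the exponent tuned to the normalized truncated
second moment `Q`. -/
lemma E_exp_deviation_le {X : ℕ → Ω → ℝ} {K : ℝ} (hK : 1 ≤ K) (hid : IdentDist SL X)
    (hU : UEND SL K X) {b c m Q ε r : ℝ} (hc : 0 < c) (hQ0 : 0 < Q) (hQ1 : Q ≤ 1)
    (hm : SL.E (fun ω => max (X 0 ω + b) 0) ≤ m)
    (hq : SL.E (fun ω => min (max (X 0 ω + b) 0) c ^ 2) ≤ ((Q * c : ℝ) : EReal)) {n : ℕ}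
    (hn : n = r * c) (hr : 2 ≤ r * ε) :
    ∃ t : ℝ, 0 ≤ t ∧
      SL.E (fun ω => Real.exp (-(t * (n * (m + ε)))) *
        Real.exp (t * ∑ k ∈ Finset.range n, min (max (X k ω + b) 0) c)) ≤
      ((K * Real.exp (2 * r) * Q : ℝ) : EReal) := by
  set s : ℝ := -(Real.log Q / 2) with hs
  have hs0 : 0 ≤ s := by
    have := Real.log_nonpos hQ0.le hQ1
    simp only [hs]; linarith
  have hQs : Q = Real.exp (-(2 * s)) := by
    rw [show -(2 * s) = Real.log Q by simp only [hs]; ring, Real.exp_log hQ0]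
  have hr0 : 0 ≤ r := by
    have : (0 : ℝ) ≤ r * c := hn ▸ n.cast_nonneg
    exact nonneg_of_mul_nonneg_left this hc
  refine ⟨s / c, by positivity, ?_⟩
  refine (SL.E_le_const_mul (Real.exp_pos _).le
    (SL.E_exp_truncated_sum_le hK hid hU hc.le (by positivity) hm hq n)).trans ?_
  rw [EReal.coe_le_coe_iff, div_mul_cancel₀ _ hc.ne', mul_left_comm (Real.exp _) K, mul_assoc K,
    ← Real.exp_add]
  refine mul_le_mul_of_nonneg_left ?_ (by linarith)
  have hsq : s ^ 2 * Real.exp s * Q ≤ 2 := by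
    have h1 : s ^ 2 ≤ 2 * Real.exp s := by
      have := Real.quadratic_le_exp_of_nonneg hs0
      linarith
    calc s ^ 2 * Real.exp s * Q ≤ 2 * Real.exp s * Real.exp s * Q := by gcongr
      _ = 2 * (Real.exp s * Real.exp s * Real.exp (-(2 * s))) := by rw [← hQs]; ring
      _ = 2 := by rw [← Real.exp_add, ← Real.exp_add]; ring_nf; simp
  calc _ = Real.exp (-(s * (r * ε)) + r * (s ^ 2 * Real.exp s * Q)) := by
        congr 1
        rw [hn]
        field_simp
        ring
    _ ≤ Real.exp (2 * r + -(2 * s)) := by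
        refine Real.exp_le_exp.2 ?_
        nlinarith [mul_le_mul_of_nonneg_left hr hs0, mul_le_mul_of_nonneg_left hsq hr0]
    _ = _ := by rw [Real.exp_add, ← hQs]

lemma min_two_pow_sq_le (x : ℝ) (j : ℕ) (hx : 0 ≤ x) :
    min x (2 ^ j) ^ 2 ≤
      1 + ∑ l ∈ Finset.range j, 4 ^ (l + 1) * (Set.Ici (2 ^ l)).indicator (fun _ => (1 : ℝ)) x := by
  induction j with
  | zero =>
    have h0 : 0 ≤ min x 1 := le_min hx zero_le_one
    simpa only [pow_zero, Finset.range_zero, Finset.sum_empty, add_zero] using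
      pow_le_one₀ h0 (min_le_right x 1)
  | succ j ih =>
    rw [Finset.sum_range_succ]
    by_cases h : (2 : ℝ) ^ j ≤ x
    · have h0 : 0 ≤ min x (2 ^ (j + 1)) := le_min hx (by positivity)
      have h1 : min x (2 ^ (j + 1)) ^ 2 ≤ (2 ^ (j + 1)) ^ 2 :=
        pow_le_pow_left₀ h0 (min_le_right _ _) 2
      have h2 : ((2 : ℝ) ^ (j + 1)) ^ 2 = 4 ^ (j + 1) := by
        rw [← pow_mul, mul_comm, pow_mul]; norm_num
      have h3 : 0 ≤ ∑ l ∈ Finset.range j,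
          4 ^ (l + 1) * (Set.Ici (2 ^ l)).indicator (fun _ => (1 : ℝ)) x :=
        Finset.sum_nonneg fun l _ => mul_nonneg (by positivity)
          (Set.indicator_nonneg (fun _ _ => zero_le_one) x)
      rw [Set.indicator_of_mem (Set.mem_Ici.2 h)]
      linarith
    · push Not at h
      rw [Set.indicator_of_notMem (by simpa using h)]
      have h1 : (2 : ℝ) ^ j ≤ 2 ^ (j + 1) := pow_le_pow_right₀ one_le_two (Nat.le_succ j)
      rw [min_eq_left h.le] at ih
      rw [min_eq_left (h.le.trans h1)]
      linarith

lemma E_truncated_sq_le (Y : Ω → ℝ) {b : ℝ} (hb : 0 ≤ b) (j : ℕ) :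
    SL.E (fun ω => min (max (Y ω + b) 0) (2 ^ j) ^ 2) ≤
      ((2 * b ^ 2 + 2 * (1 + ∑ l ∈ Finset.range j,
        4 ^ (l + 1) * SL.V {ω | 2 ^ l ≤ |Y ω|}) : ℝ) : EReal) := by
  have hsum := SL.E_le_sum (Finset.range j)
    (fun l ω => 4 ^ (l + 1) * {ω | 2 ^ l ≤ |Y ω|}.indicator (fun _ => (1 : ℝ)) ω) _
    fun l _ => SL.E_le_const_mul (l := 4 ^ (l + 1)) (by positivity)
      (SL.E_indicator {ω | 2 ^ l ≤ |Y ω|}).le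
  refine SL.E_le_add (fun ω => ?_) (SL.const_eq (2 * b ^ 2)).le
    (SL.E_le_const_mul zero_le_two (SL.E_le_add (fun ω => le_rfl) (SL.const_eq 1).le hsum))
  have h1 := min_two_pow_sq_le |Y ω| j (abs_nonneg _)
  have h2 : min (max (Y ω + b) 0) (2 ^ j) ≤ min |Y ω| (2 ^ j) + b := by
    rw [← min_add_add_right]
    refine min_le_min (max_le ?_ ?_) (by linarith)
    · linarith [le_abs_self (Y ω)]
    · positivity
  have h3 : 0 ≤ min (max (Y ω + b) 0) (2 ^ j) := le_min (le_max_right _ _) (by positivity)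
  have h4 : min (max (Y ω + b) 0) (2 ^ j) ^ 2 ≤ (min |Y ω| (2 ^ j) + b) ^ 2 :=
    pow_le_pow_left₀ h3 h2 2
  have h5 : ∀ l : ℕ, {ω | 2 ^ l ≤ |Y ω|}.indicator (fun _ => (1 : ℝ)) ω =
      (Set.Ici (2 ^ l)).indicator (fun _ => (1 : ℝ)) |Y ω| := fun l => by
    simp [Set.indicator_apply]
  simp only [h5]
  nlinarith [sq_nonneg (min |Y ω| (2 ^ j) - b)]

lemma summable_dyadic_average {w : ℕ → ℝ} (hw : ∀ l, 0 ≤ w l)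
    (hs : Summable fun l => 2 ^ l * w l) {a : ℝ} (ha : 0 ≤ a) :
    Summable fun j : ℕ => (a + 2 * (1 + ∑ l ∈ Finset.range j, 4 ^ (l + 1) * w l)) / 2 ^ j := by
  set Q : ℕ → ℝ := fun j => (a + 2 * (1 + ∑ l ∈ Finset.range j, 4 ^ (l + 1) * w l)) / 2 ^ j
    with hQ
  have hQ0 : ∀ j, 0 ≤ Q j := fun j => by
    have : 0 ≤ ∑ l ∈ Finset.range j, 4 ^ (l + 1) * w l :=
      Finset.sum_nonneg fun l _ => mul_nonneg (by positivity) (hw l)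
    simp only [hQ]; positivity
  have hrec : ∀ j, Q (j + 1) = Q j / 2 + 4 * (2 ^ j * w j) := fun j => by
    have h4 : (4 : ℝ) ^ j = 2 ^ j * 2 ^ j := by rw [← mul_pow]; norm_num
    simp only [hQ, Finset.sum_range_succ, pow_succ, h4]
    field_simp
    ring_nf
  have hsum : ∀ N, ∑ j ∈ Finset.range N, Q j + 2 * Q N =
      2 * Q 0 + 8 * ∑ j ∈ Finset.range N, 2 ^ j * w j := fun N => by
    induction N with
    | zero => simp
    | succ N ih =>
      rw [Finset.sum_range_succ, Finset.sum_range_succ, hrec]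
      linarith
  refine summable_of_sum_range_le hQ0 (c := 2 * Q 0 + 8 * ∑' j, 2 ^ j * w j) fun N => ?_
  have := hs.sum_le_tsum (Finset.range N) fun l _ => mul_nonneg (by positivity) (hw l)
  linarith [hsum N, hQ0 N]

/-- Tail probabilities of identically distributed variables, compared at doubled levels. -/
lemma E_ramp_le {X : ℕ → Ω → ℝ} (hid : IdentDist SL X) {a : ℝ} (ha : 0 < a) (k : ℕ) :
    SL.E (fun ω => min (max (X k ω / a - 1) 0) 1) ≤ (SL.V {ω | a ≤ |X 0 ω|} : EReal) := by
  have hL : LipschitzWith (a⁻¹).toNNReal fun x : ℝ => min (max (x / a - 1) 0) 1 := by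
    refine ((LipschitzWith.of_dist_le_mul fun x y => ?_).max_const 0).min_const 1
    rw [Real.dist_eq, Real.dist_eq, Real.coe_toNNReal _ (by positivity),
      sub_sub_sub_cancel_right, ← sub_div, abs_div, abs_of_pos ha, div_eq_inv_mul]
  rw [hid k _ (IsLocLip.of_lipschitzWith hL), ← SL.E_indicator]
  refine SL.mono _ _ fun ω => ?_
  by_cases h : a ≤ |X 0 ω|
  · rw [Set.indicator_of_mem (by exact h)]
    exact min_le_right _ _
  · rw [Set.indicator_of_notMem (by exact h)]
    refine (min_le_left _ _).trans (max_le ?_ le_rfl)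
    rw [sub_nonpos, div_le_one ha]
    exact (le_abs_self _).trans (not_le.1 h).le

/-- Along dyadic multiples of `r`, the sums of the variables cut off below at `-b` and shifted
by `b` are eventually at most `n (m + ε)`, outside a set of outer capacity zero. -/
lemma outerCapacity_dyadic_deviation_eq_zero {X : ℕ → Ω → ℝ} {K : ℝ} (hK : 1 ≤ K)
    (hid : IdentDist SL X) (hU : UEND SL K X) (hCh : SL.Choquet (fun ω => |X 0 ω|) ≠ ⊤)
    {b m ε : ℝ} (hb : 0 ≤ b) (hm : SL.E (fun ω => max (X 0 ω + b) 0) ≤ m)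
    {r : ℕ} (hr : 2 ≤ r * ε) :
    SL.outerCapacity {ω | ∃ᶠ j : ℕ in atTop, ω ∈ {ω | ((r * 2 ^ j : ℕ) : ℝ) * (m + ε) <
      ∑ k ∈ Finset.range (r * 2 ^ j), max (X k ω + b) 0}} = 0 := by
  set w : ℕ → ℝ := fun l => SL.V {ω | 2 ^ l ≤ |X 0 ω|} with hw
  have hw0 : ∀ l, 0 ≤ w l := fun l => SL.V_nonneg _
  have hu : Summable fun l => 2 ^ l * w l := SL.summable_dyadic_tail hCh
  set Q : ℕ → ℝ := fun j =>
    (2 * b ^ 2 + 2 * (1 + ∑ l ∈ Finset.range j, 4 ^ (l + 1) * w l)) / 2 ^ j with hQ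
  have hQs : Summable Q := summable_dyadic_average hw0 hu (by positivity)
  have hQpos : ∀ j, 0 < Q j := fun j => by
    have : 0 ≤ ∑ l ∈ Finset.range j, 4 ^ (l + 1) * w l :=
      Finset.sum_nonneg fun l _ => mul_nonneg (by positivity) (hw0 l)
    simp only [hQ]; positivity
  have htail : Summable fun j => 4 * r * (2 ^ (j - 2) * w (j - 2)) := by
    rw [← summable_nat_add_iff 2]
    simpa using hu.mul_left (4 * (r : ℝ))
  refine SL.outerCapacity_frequently_eq_zero
    (htail.add (hQs.mul_left (K * Real.exp (2 * r)))) ?_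
  have hpow : Tendsto (fun j : ℕ => (2 : ℝ) ^ j) atTop atTop :=
    tendsto_pow_atTop_atTop_of_one_lt one_lt_two
  filter_upwards [hQs.tendsto_atTop_zero.eventually_le_const zero_lt_one, eventually_ge_atTop 2,
    hpow.eventually_ge_atTop (2 * b)] with j hQ1 hj hbj
  obtain ⟨i, rfl⟩ : ∃ i, j = i + 2 := ⟨j - 2, by omega⟩
  set n : ℕ := r * 2 ^ (i + 2) with hn
  have hnc : (n : ℝ) = r * 2 ^ (i + 2) := by simp [hn]
  have hq : SL.E (fun ω => min (max (X 0 ω + b) 0) (2 ^ (i + 2)) ^ 2) ≤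
      ((Q (i + 2) * 2 ^ (i + 2) : ℝ) : EReal) := by
    refine (SL.E_truncated_sq_le (X 0) hb (i + 2)).trans_eq ?_
    rw [hQ, div_mul_cancel₀ _ (by positivity)]
  obtain ⟨t, ht, hE⟩ := SL.E_exp_deviation_le hK hid hU (by positivity) (hQpos _) hQ1 hm hq hnc hr
  have hramp := SL.E_le_sum (Finset.range n) _ _ fun k _ =>
    SL.E_ramp_le hid (a := 2 ^ i) (by positivity) k
  have h0 : ∀ (k : ℕ) ω, 0 ≤ min (max (X k ω / 2 ^ i - 1) 0) 1 := fun k ω =>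
    le_min (le_max_right _ _) zero_le_one
  have hsum0 : ∀ ω, 0 ≤ ∑ k ∈ Finset.range n, min (max (X k ω / 2 ^ i - 1) 0) 1 :=
    fun ω => Finset.sum_nonneg fun k _ => h0 k ω
  refine (SL.V_le_of_E_le (fun ω => ?_) (fun ω hω => ?_)
    (SL.E_le_add (fun ω => le_rfl) hramp hE)).trans (le_of_eq ?_)
  · have := hsum0 ω
    positivity
  · by_cases hbig : ∃ k ∈ Finset.range n, 2 ^ (i + 2) < max (X k ω + b) 0
    · obtain ⟨k, hk, hlt⟩ := hbig
      have hX : 2 ^ (i + 2) < X k ω + b := by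
        rcases lt_max_iff.1 hlt with h | h
        · exact h
        · exact absurd h (not_lt.2 (by positivity))
      have h1 : min (max (X k ω / 2 ^ i - 1) 0) 1 = 1 := by
        refine min_eq_right (le_max_of_le_left ?_)
        rw [le_sub_iff_add_le, le_div_iff₀ (by positivity)]
        rw [pow_add] at hX hbj
        linarith
      have h2 := Finset.single_le_sum (f := fun k => min (max (X k ω / 2 ^ i - 1) 0) 1)
        (fun k _ => h0 k ω) hk
      have h3 : 0 ≤ Real.exp (-(t * (n * (m + ε)))) *
        Real.exp (t * ∑ k ∈ Finset.range n, min (max (X k ω + b) 0) (2 ^ (i + 2))) := by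
        positivity
      simp only [h1] at h2
      linarith
    · push Not at hbig
      have heq : ∑ k ∈ Finset.range n, min (max (X k ω + b) 0) (2 ^ (i + 2)) =
          ∑ k ∈ Finset.range n, max (X k ω + b) 0 :=
        Finset.sum_congr rfl fun k hk => min_eq_left (hbig k hk)
      rw [heq, ← Real.exp_add]
      have h1 : 1 ≤ Real.exp (-(t * (n * (m + ε))) +
          t * ∑ k ∈ Finset.range n, max (X k ω + b) 0) := by
        refine Real.one_le_exp ?_
        have := mul_le_mul_of_nonneg_left (le_of_lt hω) ht
        linarith
      linarith [hsum0 ω]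
  · simp only [Finset.sum_const, Finset.card_range, nsmul_eq_mul, hnc, Nat.add_sub_cancel, hw]
    ring

lemma exists_dyadic_block {R : ℕ} (hR : 1 ≤ R) {n : ℕ} (hn : R ≤ n) :
    ∃ j r : ℕ, r ∈ Finset.Ico R (2 * R) ∧ r * 2 ^ j ≤ n ∧ n < (r + 1) * 2 ^ j := by
  induction n using Nat.strong_induction_on with
  | _ n ih =>
    by_cases h : n < 2 * R
    · exact ⟨0, n, by simp [hn, h], by simp, by simp⟩
    · obtain ⟨j, r, hr, h1, h2⟩ := ih (n / 2) (by omega) (by omega)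
      refine ⟨j + 1, r, hr, ?_, ?_⟩
      · rw [pow_succ, ← mul_assoc]; omega
      · rw [pow_succ, ← mul_assoc]; omega

/-- A nonnegative sequence whose averages are eventually at most `L` along the dyadic multiples
of all integers in `[R, 2R]` has all averages eventually at most `L + L / R`. -/
lemma eventually_sum_le_of_dyadic {z : ℕ → ℝ} (hz : ∀ k, 0 ≤ z k) {L : ℝ} (hL : 0 ≤ L) {R : ℕ}
    (hR : 1 ≤ R) (h : ∀ r ∈ Finset.Icc R (2 * R), ∀ᶠ j : ℕ in atTop,
      ∑ k ∈ Finset.range (r * 2 ^ j), z k ≤ ((r * 2 ^ j : ℕ) : ℝ) * L) :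
    ∀ᶠ n : ℕ in atTop, ∑ k ∈ Finset.range n, z k ≤ n * (L + L / R) := by
  have hall := (Filter.eventually_all_finset _).2 h
  obtain ⟨J, hJ⟩ := eventually_atTop.1 hall
  filter_upwards [eventually_ge_atTop R, eventually_ge_atTop (2 * R * 2 ^ J)] with n hn hnJ
  obtain ⟨j, r, hr, h1, h2⟩ := exists_dyadic_block hR hn
  rw [Finset.mem_Ico] at hr
  have hj : J ≤ j := by
    by_contra hlt
    push Not at hlt
    have h3 : (2 : ℕ) ^ j ≤ 2 ^ J := Nat.pow_le_pow_right (by norm_num) hlt.le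
    have h4 : (r + 1) * 2 ^ j ≤ 2 * R * 2 ^ J := Nat.mul_le_mul (by omega) h3
    omega
  have h5 := hJ j hj (r + 1) (Finset.mem_Icc.2 (by omega))
  have h6 : ∑ k ∈ Finset.range n, z k ≤ ∑ k ∈ Finset.range ((r + 1) * 2 ^ j), z k :=
    Finset.sum_le_sum_of_subset_of_nonneg (Finset.range_subset_range.2 h2.le) fun k _ _ => hz k
  refine (h6.trans h5).trans ?_
  have hR0 : (0 : ℝ) < R := by exact_mod_cast hR
  have h7 : ((2 : ℝ) ^ j) ≤ n / R := by
    rw [le_div_iff₀ hR0]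
    have : R * 2 ^ j ≤ n := (Nat.mul_le_mul_right _ hr.1).trans h1
    rw [mul_comm]
    exact_mod_cast this
  have h8 : (r : ℝ) * 2 ^ j ≤ n := by exact_mod_cast h1
  calc (((r + 1) * 2 ^ j : ℕ) : ℝ) * L = (r * 2 ^ j + 2 ^ j) * L := by push_cast; ring
    _ ≤ (n + n / R) * L := by gcongr
    _ = _ := by ring

/-- Quantitative form of the upper strong law. -/
lemma outerCapacity_average_gt_eq_zero {X : ℕ → Ω → ℝ} {K : ℝ} (hK : 1 ≤ K)
    (hid : IdentDist SL X) (hU : UEND SL K X)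
    (hunif : Tendsto (fun c : ℝ => SL.E fun ω => max (|X 0 ω| - c) 0) atTop (nhds (0 : EReal)))
    (hCh : SL.Choquet (fun ω => |X 0 ω|) ≠ ⊤) {μ ε : ℝ} (hμ : SL.E (X 0) ≤ μ) (hε : 0 < ε) :
    SL.outerCapacity {ω | ∃ᶠ n : ℕ in atTop,
      μ + 3 * ε < (∑ k ∈ Finset.range n, X k ω) / n} = 0 := by
  obtain ⟨b, hbε, hb⟩ := ((hunif.eventually_lt_const (EReal.coe_pos.2 hε)).and
    (eventually_ge_atTop 0)).exists
  set m : ℝ := μ + b + ε with hmdef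
  have hm : SL.E (fun ω => max (X 0 ω + b) 0) ≤ m := by
    refine SL.E_le_add (fun ω => ?_) (SL.E_le_add (fun ω => le_rfl) hμ (SL.const_eq b).le) hbε.le
    rcases le_total 0 (X 0 ω + b) with h | h
    · rw [max_eq_left h]
      linarith [le_max_right (|X 0 ω| - b) 0]
    · rw [max_eq_right h]
      linarith [le_max_left (|X 0 ω| - b) 0, neg_le_abs (X 0 ω)]
  have hm0 : 0 ≤ m :=
    EReal.coe_nonneg.1 ((SL.E_nonneg fun ω => le_max_right (X 0 ω + b) 0).trans hm)
  obtain ⟨R, hR⟩ := exists_nat_ge (max 1 (max (2 / ε) ((m + ε) / ε)))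
  simp only [max_le_iff, div_le_iff₀ hε] at hR
  obtain ⟨hR1, hR2, hR3⟩ := hR
  have hR1' : 1 ≤ R := by exact_mod_cast hR1
  have hnull : ∀ r ∈ Finset.Icc R (2 * R), SL.outerCapacity {ω | ∃ᶠ j : ℕ in atTop, ω ∈
      {ω | ((r * 2 ^ j : ℕ) : ℝ) * (m + ε) <
        ∑ k ∈ Finset.range (r * 2 ^ j), max (X k ω + b) 0}} = 0 := by
    intro r hr
    refine SL.outerCapacity_dyadic_deviation_eq_zero hK hid hU hCh hb hm (hR2.trans ?_)
    have : (R : ℝ) ≤ r := by exact_mod_cast (Finset.mem_Icc.1 hr).1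
    gcongr
  have hunion := (measure_biUnion_null_iff (μ := SL.outerCapacity)
    (Finset.Icc R (2 * R)).countable_toSet).2 hnull
  refine measure_mono_null (fun ω hω => ?_) hunion
  by_contra hnot
  simp only [Set.mem_iUnion, Set.mem_ofPred_eq, not_exists, Finset.mem_coe, not_frequently,
    not_lt] at hnot
  have hev := eventually_sum_le_of_dyadic (fun k => le_max_right (X k ω + b) 0)
    (by linarith) hR1' hnot
  refine hω ?_
  filter_upwards [hev, eventually_gt_atTop 0] with n hn hn0
  have hn0' : (0 : ℝ) < n := by exact_mod_cast hn0
  rw [not_lt, div_le_iff₀ hn0']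
  have h1 : ∑ k ∈ Finset.range n, X k ω + n * b ≤ ∑ k ∈ Finset.range n, max (X k ω + b) 0 := by
    calc _ = ∑ k ∈ Finset.range n, (X k ω + b) := by simp [Finset.sum_add_distrib]
      _ ≤ _ := Finset.sum_le_sum fun k _ => le_max_left _ _
  have h2 : (m + ε) / R ≤ ε := by
    rw [div_le_iff₀ (by linarith)]
    linarith
  have h3 : (n : ℝ) * (m + ε + (m + ε) / R) ≤ n * (m + ε + ε) := by gcongr
  simp only [hmdef] at h3 hn
  linarith

end SublinearExp

/-- Theorem 4.3(a), first part: strong law of large numbers (upper half) for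
upper extended negatively dependent, identically distributed random variables. -/
theorem stmt7 {Ω : Type} (SL : SublinearExp Ω) (X : ℕ → Ω → ℝ)
    (K : ℝ) (hK : 1 ≤ K)
    (hid : SublinearExp.IdentDist SL X)
    (hUEND : SublinearExp.UEND SL K X)
    (hunif : Tendsto (fun c : ℝ => SL.E fun ω => max (|X 0 ω| - c) 0)
      atTop (nhds (0 : EReal)))
    (hCh : SL.Choquet (fun ω => |X 0 ω|) ≠ ⊤) :
    SL.Vout {ω | SL.E (X 0) <
      limsup (fun n : ℕ => (((∑ k ∈ Finset.range n, X k ω) / n : ℝ) : EReal))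
        atTop} = 0 := by
  have hμtop : SL.E (X 0) ≠ ⊤ := by
    obtain ⟨b, hb⟩ := (hunif.eventually_lt_const (EReal.coe_pos.2 one_pos)).exists
    refine ne_top_of_le_ne_top (EReal.coe_ne_top _)
      (SL.E_le_add (fun ω => ?_) (SL.const_eq b).le hb.le)
    linarith [le_abs_self (X 0 ω), le_max_left (|X 0 ω| - b) 0]
  obtain ⟨μ, hμ⟩ : ∃ μ : ℝ, SL.E (X 0) = μ :=
    ⟨_, (EReal.coe_toReal hμtop (SL.E_ne_bot _)).symm⟩
  rw [← SL.outerCapacity_apply]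
  have hnull := measure_iUnion_null fun N : ℕ =>
    SL.outerCapacity_average_gt_eq_zero hK hid hUEND hunif hCh hμ.le
      (show (0 : ℝ) < 1 / (N + 1) by positivity)
  refine measure_mono_null (fun ω hω => ?_) hnull
  rw [Set.mem_ofPred_eq, hμ] at hω
  obtain ⟨y, hμy, hy⟩ := EReal.lt_iff_exists_real_btwn.1 hω
  obtain ⟨N, hN⟩ := exists_nat_one_div_lt
    (show 0 < (y - μ) / 3 by linarith [EReal.coe_lt_coe_iff.1 hμy])
  refine Set.mem_iUnion.2 ⟨N, (frequently_lt_of_lt_limsup (by isBoundedDefault) hy).mono ?_⟩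
  intro n hn
  have := EReal.coe_lt_coe_iff.1 hn
  linarith
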